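/- Let f(z) = Σ_{n≥0} a_n z^n be analytic on the unit disk with |f(z)| ≤ 1 and S_r = π Σ_{n≥1} n|a_n|^2 r^{2n}. Then for all r ≤ 1/2: |a_0|^2 + Σ_{n≥1} |a_n| r^n + (9/8)·S_r/(π − S_r) ≤ 1. -/

import Mathlib

/-!
Write `t = |a₀|`; if `t = 1`, all other coefficients vanish. For `t < 1` the function `ω = (f - a₀) / (1 - ā₀ f)` is a Schwarz function, so
`ω = z ψ` with `|ψ| ≤ 1` on the disk, and `(f - a₀) / z = ψ (1 - ā₀ f)`. Multiplication by `ψ` is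
a contraction on truncated power series (`truncated_contraction`, deduced from Bessel's inequality
on circles of radius `R → 1`). Comparing coefficients up to order `n` gives
`∑_{k=1}^{n+1} |a_k|² ≤ (1 - t²)² + t² ∑_{k=1}^{n} |a_k|²`, and by induction the partial sums of
`|a_{k+1}|²` are dominated by those of `(1 - t²)² t^{2k}`, the values attained by the Möbius map
`(t - z) / (1 - t z)` (`partial_sum_le`).

Summation by parts turns this into `∑ w_k |a_{k+1}|² ≤ ∑ w_k (1 - t²)² t^{2k}` for every nonnegative
nonincreasing weight `w`. At `r = 1/2` the weight `(k + 1) 4^{-(k+1)}` bounds the area,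
`S/π ≤ 4 (1 - t²)² / (4 - t²)²`, and geometric weights `ρ^k`, combined with a termwise AM-GM
inequality (`amgm_tsum`), bound `∑ |a_k| 2^{-k}` by `(1 - t²) / (2 - t)` when `t ≥ 1/2`
and by a cruder quantity when `t < 1/2`. What remains is a one-variable inequality, `final_bound`;
for `t ≥ 1/2` it reduces to `(3/2) (1 + t) (2 - t) ≤ 4 - t⁴`, with equality at `t = 1`.
The case `r < 1/2` follows because every term increases with `r`.
-/

open Finset

/-! ### Power series bounded by one on the disk -/

/-- Bessel's inequality on the unit circle: a power series that is dominated pointwise by a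
polynomial has no larger sum of squared coefficients. -/
lemma sum_sq_le_of_norm_le_on_circle (c d : ℕ → ℂ) (hc : Summable fun k => ‖c k‖) (m n : ℕ)
    (h : ∀ w : ℂ, ‖w‖ = 1 → ‖∑' k, c k * w ^ k‖ ≤ ‖∑ k ∈ range n, d k * w ^ k‖) :
    ∑ k ∈ range m, ‖c k‖ ^ 2 ≤ ∑ k ∈ range n, ‖d k‖ ^ 2 := by
  have : Fact ((0 : ℝ) < 1) := ⟨one_pos⟩
  let e : ℕ → C(AddCircle (1 : ℝ), ℂ) := fun k => fourier (k : ℤ)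
  have he : ∀ k t, e k t = (fourier 1 t : ℂ) ^ k := by
    intro k t
    simp [e, fourier_apply, AddCircle.toCircle_nsmul]
  have hw : ∀ t : AddCircle (1 : ℝ), ‖(fourier 1 t : ℂ)‖ = 1 := by
    intro t
    rw [fourier_apply]
    exact Circle.norm_coe _
  have hS : Summable fun k => c k • e k := by
    apply Summable.of_norm
    refine hc.congr fun k => ?_
    rw [norm_smul, show ‖e k‖ = 1 from fourier_norm _, mul_one]
  let L := ContinuousMap.toLp (E := ℂ) 2 (AddCircle.haarAddCircle (T := (1 : ℝ))) ℂ
  have hon : Orthonormal ℂ (fun k => L (e k)) := 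
    (orthonormal_fourier (T := (1 : ℝ))).comp (fun k : ℕ => (k : ℤ)) Nat.cast_injective
  set F := ∑' k, c k • e k with hF
  set P := ∑ k ∈ range n, d k • e k with hP
  have hFL : HasSum (fun k => c k • L (e k)) (L F) := by
    simpa using hS.hasSum.mapL L
  have hinner : ∀ k, inner ℂ (L (e k)) (L F) = c k := by
    intro k
    have h1 := hFL.mapL (innerSL ℂ (L (e k)))
    refine h1.unique ?_
    refine HasSum.congr_fun (hasSum_ite_eq k (c k)) fun j => ?_
    rw [map_smul, innerSL_apply_apply, smul_eq_mul, orthonormal_iff_ite.mp hon]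
    by_cases hkj : k = j
    · subst hkj; simp
    · simp [hkj, Ne.symm hkj]
  have hb := hon.sum_inner_products_le (s := range m) (L F)
  simp only [hinner] at hb
  have hPn : ‖L P‖ ^ 2 = ∑ k ∈ range n, ‖d k‖ ^ 2 := by
    have : L P = ∑ k ∈ range n, d k • L (e k) := by simp [hP, map_sum]
    have h2 := hon.inner_sum d d (range n)
    rw [← this, inner_self_eq_norm_sq_to_K] at h2
    have h3 : ∀ z : ℂ, (starRingEnd ℂ) z * z = ((‖z‖ ^ 2 : ℝ) : ℂ) := by
      intro z; rw [mul_comm, Complex.mul_conj, Complex.normSq_eq_norm_sq]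
    simp only [h3] at h2
    rw [← Complex.ofReal_sum] at h2
    exact Complex.ofReal_injective (by simpa using h2)
  have hle : ‖L F‖ ≤ ‖L P‖ := by
    apply MeasureTheory.Lp.norm_le_norm_of_ae_le
    filter_upwards [ContinuousMap.coeFn_toLp (p := 2) (𝕜 := ℂ) AddCircle.haarAddCircle F,
      ContinuousMap.coeFn_toLp (p := 2) (𝕜 := ℂ) AddCircle.haarAddCircle P] with t h1 h2
    rw [h1, h2]
    have h3 : F t = ∑' k, c k * (fourier 1 t : ℂ) ^ k := by
      rw [hF, ← ContinuousMap.tsum_apply hS]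
      simp [he]
    have h4 : P t = ∑ k ∈ range n, d k * (fourier 1 t : ℂ) ^ k := by
      simp [hP, ContinuousMap.sum_apply, he]
    rw [h3, h4]
    exact h _ (hw t)
  calc _ ≤ ‖L F‖ ^ 2 := hb
    _ ≤ ‖L P‖ ^ 2 := by gcongr
    _ = _ := hPn

lemma coeff_unique (a b : ℕ → ℂ) (f : ℂ → ℂ)
    (ha : ∀ z : ℂ, ‖z‖ < 1 → HasSum (fun n => a n * z ^ n) (f z))
    (hb : ∀ z : ℂ, ‖z‖ < 1 → HasSum (fun n => b n * z ^ n) (f z)) : a = b := by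
  have key : ∀ a : ℕ → ℂ, (∀ z : ℂ, ‖z‖ < 1 → HasSum (fun n => a n * z ^ n) (f z)) →
      HasFPowerSeriesAt f (FormalMultilinearSeries.ofScalars ℂ a) 0 := by
    intro a ha
    rw [hasFPowerSeriesAt_iff]
    filter_upwards [Metric.ball_mem_nhds (0 : ℂ) one_pos] with z hz
    simp only [FormalMultilinearSeries.coeff_ofScalars, smul_eq_mul, zero_add]
    simpa [mul_comm] using ha z (by simpa using hz)
  exact FormalMultilinearSeries.ofScalars_series_injective ℂ ℂ
    ((key a ha).eq_formalMultilinearSeries (key b hb))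

lemma differentiableOn_of_hasSum (a : ℕ → ℂ) (f : ℂ → ℂ)
    (ha : ∀ z : ℂ, ‖z‖ < 1 → HasSum (fun n => a n * z ^ n) (f z)) :
    DifferentiableOn ℂ f (Metric.ball 0 1) := by
  have : HasFPowerSeriesOnBall f (FormalMultilinearSeries.ofScalars ℂ a) 0 1 := by
    refine ⟨?_, one_pos, ?_⟩
    · refine ENNReal.le_of_forall_nnreal_lt fun ρ hρ => ?_
      apply FormalMultilinearSeries.le_radius_of_summable_norm
      have h1 : ρ < 1 := by exact_mod_cast hρ
      have := (ha (ρ : ℝ) (by simpa using h1)).summable.norm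
      simpa [FormalMultilinearSeries.ofScalars_norm] using this
    · intro z hz
      have hz' : ‖z‖ < 1 := by
        rw [← ENNReal.ofReal_one, Metric.eball_ofReal] at hz
        simpa using hz
      simpa [FormalMultilinearSeries.ofScalars_apply_eq, mul_comm] using ha z hz'
  have h := this.differentiableOn
  rwa [show Metric.eball (0:ℂ) 1 = Metric.ball 0 1 by
    rw [← ENNReal.ofReal_one, Metric.eball_ofReal]] at h

lemma exists_hasSum (f : ℂ → ℂ) (hf : DifferentiableOn ℂ f (Metric.ball 0 1)) :
    ∃ s : ℕ → ℂ, ∀ z : ℂ, ‖z‖ < 1 → HasSum (fun n => s n * z ^ n) (f z) := by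
  refine ⟨fun n => (n.factorial : ℂ)⁻¹ * iteratedDeriv n f 0, fun z hz => ?_⟩
  have := Complex.hasSum_taylorSeries_on_ball hf (z := z) (by simpa using hz)
  refine HasSum.congr_fun this fun n => ?_
  simp only [smul_eq_mul, sub_zero]; ring

/-- Multiplication by a function bounded by `1` on the disk contracts the `ℓ²` norm of the first `n`
coefficients: those of `ψ g` depend only on the truncation of `g` to degree `< n`, so Bessel's
inequality applies to `ψ` times that polynomial on each circle `|z| = R < 1`, and `R → 1`. -/
lemma truncated_contraction (ψ : ℂ → ℂ) (s g : ℕ → ℂ)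
    (hs : ∀ z : ℂ, ‖z‖ < 1 → HasSum (fun n => s n * z ^ n) (ψ z))
    (hψ : ∀ z : ℂ, ‖z‖ < 1 → ‖ψ z‖ ≤ 1) (n : ℕ) :
    ∑ k ∈ range n, ‖∑ j ∈ range (k + 1), s j * g (k - j)‖ ^ 2 ≤ ∑ k ∈ range n, ‖g k‖ ^ 2 := by
  have key : ∀ R : ℝ, 0 < R → R < 1 →
      ∑ k ∈ range n, ‖∑ j ∈ range (k + 1), s j * g (k - j)‖ ^ 2 * (R ^ k) ^ 2
        ≤ ∑ k ∈ range n, ‖g k‖ ^ 2 * (R ^ k) ^ 2 := by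
    intro R hR0 hR1
    let p : ℕ → ℂ := fun k => if k < n then g k else 0
    let u : ℕ → ℂ := fun k => s k * (R : ℂ) ^ k
    let v : ℕ → ℂ := fun k => p k * (R : ℂ) ^ k
    let c : ℕ → ℂ := fun k => ∑ j ∈ range (k + 1), u j * v (k - j)
    have hRn : ‖(R : ℂ)‖ < 1 := by simpa [abs_of_pos hR0] using hR1
    have hu : Summable fun k => ‖u k‖ := (hs R hRn).summable.norm
    have hv0 : ∀ k ∉ range n, v k = 0 := by
      intro k hk
      have : ¬ k < n := by simpa using hk
      simp [v, p, this]
    have hv : Summable fun k => ‖v k‖ :=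
      summable_of_ne_finset_zero (s := range n) fun k hk => by rw [hv0 k hk, norm_zero]
    have hc : Summable fun k => ‖c k‖ := by
      simpa only [c, Nat.sum_antidiagonal_eq_sum_range_succ (fun i j => u i * v j)] using
        summable_norm_sum_mul_antidiagonal_of_summable_norm hu hv
    have hck : ∀ k ∈ range n, c k = (∑ j ∈ range (k + 1), s j * g (k - j)) * (R : ℂ) ^ k := by
      intro k hk
      rw [sum_mul]
      refine sum_congr rfl fun j hj => ?_
      have h1 : j ≤ k := by simpa [Nat.lt_succ_iff] using hj
      have h2 : k - j < n := by have := mem_range.mp hk; omega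
      simp only [u, v, p, h2, if_true]
      rw [show (R : ℂ) ^ k = R ^ j * R ^ (k - j) by rw [← pow_add]; congr 1; omega]
      ring
    have hcirc : ∀ w : ℂ, ‖w‖ = 1 →
        ‖∑' k, c k * w ^ k‖ ≤ ‖∑ k ∈ range n, v k * w ^ k‖ := by
      intro w hw
      have hRw : ‖(R : ℂ) * w‖ < 1 := by rw [norm_mul, hw, mul_one]; exact hRn
      have hu' : Summable fun k => ‖u k * w ^ k‖ := by simpa [hw] using hu
      have hv' : Summable fun k => ‖v k * w ^ k‖ := by simpa [hw] using hv
      have h1 := (hasSum_sum_range_mul_of_summable_norm hu' hv').tsum_eq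
      have h2 : ∑' k, u k * w ^ k = ψ (R * w) := by
        rw [← (hs _ hRw).tsum_eq]
        refine tsum_congr fun k => ?_
        simp only [u]; rw [mul_pow]; ring
      have h3 : ∑' k, v k * w ^ k = ∑ k ∈ range n, v k * w ^ k :=
        tsum_eq_sum fun k hk => by rw [hv0 k hk, zero_mul]
      have h4 : ∀ k, ∑ j ∈ range (k + 1), u j * w ^ j * (v (k - j) * w ^ (k - j))
          = c k * w ^ k := by
        intro k
        rw [sum_mul]
        refine sum_congr rfl fun j hj => ?_
        have h1 : j ≤ k := by simpa [Nat.lt_succ_iff] using hj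
        rw [show w ^ k = w ^ j * w ^ (k - j) by rw [← pow_add]; congr 1; omega]
        ring
      simp only [h4] at h1
      rw [h1, h2, h3, norm_mul]
      exact mul_le_of_le_one_left (norm_nonneg _) (hψ _ hRw)
    -- on `|z| = R` the rescaled series `c` is `ψ` times the polynomial with coefficients `v`
    have hfin := sum_sq_le_of_norm_le_on_circle c v hc n n hcirc
    have hl : ∀ k ∈ range n, ‖c k‖ ^ 2
        = ‖∑ j ∈ range (k + 1), s j * g (k - j)‖ ^ 2 * (R ^ k) ^ 2 := by
      intro k hk
      rw [hck k hk, norm_mul, mul_pow, norm_pow, Complex.norm_real, Real.norm_eq_abs,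
        abs_of_pos hR0]
    have hr : ∀ k ∈ range n, ‖v k‖ ^ 2 = ‖g k‖ ^ 2 * (R ^ k) ^ 2 := by
      intro k hk
      simp only [v, p, mem_range.mp hk, if_true]
      rw [norm_mul, mul_pow, norm_pow, Complex.norm_real, Real.norm_eq_abs, abs_of_pos hR0]
    rwa [sum_congr rfl hl, sum_congr rfl hr] at hfin
  have lim : ∀ b : ℕ → ℝ, Filter.Tendsto (fun R : ℝ => ∑ k ∈ range n, b k * (R ^ k) ^ 2)
      (nhdsWithin 1 (Set.Iio 1)) (nhds (∑ k ∈ range n, b k)) := by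
    intro b
    have : Continuous fun R : ℝ => ∑ k ∈ range n, b k * (R ^ k) ^ 2 := by fun_prop
    simpa using (this.tendsto 1).mono_left nhdsWithin_le_nhds
  refine le_of_tendsto_of_tendsto (lim _) (lim _) ?_
  filter_upwards [Ioo_mem_nhdsLT (zero_lt_one (α := ℝ))] with R hR
  exact key R hR.1 hR.2

/-- The partial sums of `|a_{k+1}|²` are at most those of the Möbius map with the same `|a₀|`. -/
lemma partial_sum_le (f : ℂ → ℂ) (a : ℕ → ℂ)
    (hf : ∀ z : ℂ, ‖z‖ < 1 → HasSum (fun n => a n * z ^ n) (f z))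
    (hbd : ∀ z : ℂ, ‖z‖ < 1 → ‖f z‖ ≤ 1) :
    ‖a 0‖ ≤ 1 ∧ ∀ n, ∑ k ∈ range n, ‖a (k + 1)‖ ^ 2
      ≤ ∑ k ∈ range n, (1 - ‖a 0‖ ^ 2) ^ 2 * (‖a 0‖ ^ 2) ^ k := by
  have hf0 : f 0 = a 0 := by
    refine (hf 0 (by simp)).unique ?_
    refine HasSum.congr_fun (hasSum_ite_eq 0 (a 0)) fun j => ?_
    rcases j with _ | j <;> simp
  have ha0 : ‖a 0‖ ≤ 1 := hf0 ▸ hbd 0 (by simp)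
  refine ⟨ha0, ?_⟩
  rcases ha0.eq_or_lt with h1 | hlt
  · intro n
    -- `f` times the constant `1` gives `∑ |a_k|² ≤ 1`, so `|a₀| = 1` kills all other coefficients
    have h := truncated_contraction f a (fun k => if k = 0 then 1 else 0) hf hbd (n + 1)
    have h2 : ∀ k, ∑ j ∈ range (k + 1), a j * (if k - j = 0 then (1 : ℂ) else 0) = a k := by
      intro k
      rw [sum_eq_single_of_mem k (by simp)]
      · simp
      · intro j hj hjk
        have : k - j ≠ 0 := by have := mem_range.mp hj; omega
        simp [this]
    simp only [h2] at h
    rw [sum_range_succ', sum_range_succ' (fun k => ‖if k = 0 then (1 : ℂ) else 0‖ ^ 2)] at h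
    simp only [h1, Nat.add_eq_zero_iff, one_ne_zero, and_false, if_false, norm_zero, if_true,
      norm_one] at h
    simp only [h1]
    norm_num at h ⊢
    exact h
  set α := a 0 with hα
  set β := (starRingEnd ℂ) α with hβ
  have hβn : ‖β‖ = ‖α‖ := by simp [β]
  have hden : ∀ z : ℂ, ‖z‖ < 1 → 1 - β * f z ≠ 0 := by
    intro z hz h0
    have : ‖β * f z‖ < 1 := by
      rw [norm_mul, hβn]
      calc ‖α‖ * ‖f z‖ ≤ ‖α‖ * 1 := by gcongr; exact hbd z hz
        _ < 1 := by simpa using hlt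
    rw [← sub_eq_zero.mp h0, norm_one] at this
    exact lt_irrefl _ this
  have hfd := differentiableOn_of_hasSum a f hf
  let ω : ℂ → ℂ := fun z => (f z - α) / (1 - β * f z)
  have hωd : DifferentiableOn ℂ ω (Metric.ball 0 1) :=
    (hfd.sub_const _).div ((hfd.const_mul β).const_sub 1) fun z hz => hden z (by simpa using hz)
  have hω0 : ω 0 = 0 := by simp [ω, hf0]
  have hωle : ∀ z : ℂ, ‖z‖ < 1 → ‖ω z‖ ≤ 1 := by
    intro z hz
    simp only [ω]
    rw [norm_div, div_le_one (norm_pos_iff.mpr (hden z hz))]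
    -- `|1 - ᾱw|² - |w - α|² = (1 - |α|²)(1 - |w|²)`
    have h1 := hbd z hz
    have e1 : ‖1 - β * f z‖ ^ 2 - ‖f z - α‖ ^ 2 = (1 - ‖α‖ ^ 2) * (1 - ‖f z‖ ^ 2) := by
      simp only [← Complex.normSq_eq_norm_sq, Complex.normSq_apply, hβ, Complex.sub_re,
        Complex.sub_im, Complex.mul_re, Complex.mul_im, Complex.conj_re, Complex.conj_im,
        Complex.one_re, Complex.one_im]
      ring
    have e2 : 0 ≤ (1 - ‖α‖ ^ 2) * (1 - ‖f z‖ ^ 2) := by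
      apply mul_nonneg <;> nlinarith [norm_nonneg α, norm_nonneg (f z)]
    exact le_of_sq_le_sq (by linarith) (norm_nonneg _)
  let ψ := dslope ω 0
  have hψd : DifferentiableOn ℂ ψ (Metric.ball 0 1) :=
    (Complex.differentiableOn_dslope (Metric.ball_mem_nhds 0 one_pos)).mpr hωd
  have hψ : ∀ z : ℂ, ‖z‖ < 1 → ‖ψ z‖ ≤ 1 := by
    intro z hz
    have := Complex.norm_dslope_le_div_of_mapsTo_ball (R₂ := 1) hωd
      (fun w hw => by
        rw [hω0]; simpa using hωle w (by simpa using hw)) (z := z) (by simpa using hz)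
    simpa using this
  obtain ⟨s, hs⟩ := exists_hasSum ψ hψd
  -- the Taylor coefficients of `1 - ᾱ f`
  let g : ℕ → ℂ := fun k => (if k = 0 then 1 else 0) - β * a k
  have hg : ∀ z : ℂ, ‖z‖ < 1 → HasSum (fun n => g n * z ^ n) (1 - β * f z) := by
    intro z hz
    have h1 : HasSum (fun n : ℕ => (if n = 0 then (1 : ℂ) else 0)) 1 := hasSum_ite_eq 0 1
    refine HasSum.congr_fun (h1.sub ((hf z hz).mul_left β)) fun n => ?_
    simp only [g]
    rcases n with _ | n
    · simp
    · simp only [Nat.add_eq_zero_iff, one_ne_zero, and_false, if_false]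
      ring
  -- the Taylor coefficients of `α + z ψ (1 - ᾱ f)`, which is `f` again
  let q : ℕ → ℂ := fun k => match k with
    | 0 => α
    | k + 1 => ∑ j ∈ range (k + 1), s j * g (k - j)
  have hq : ∀ z : ℂ, ‖z‖ < 1 → HasSum (fun n => q n * z ^ n) (f z) := by
    intro z hz
    have h1 := hasSum_sum_range_mul_of_summable_norm (hs z hz).summable.norm
      (hg z hz).summable.norm
    rw [(hs z hz).tsum_eq, (hg z hz).tsum_eq] at h1
    have h2 : z * (ψ z * (1 - β * f z)) = f z - α := by
      have h3 : z * ψ z = ω z := by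
        have := sub_smul_dslope ω 0 z
        simpa [hω0] using this
      rw [← mul_assoc, h3, div_mul_cancel₀ _ (hden z hz)]
    rw [← hasSum_nat_add_iff' 1]
    simp only [range_one, sum_singleton, pow_zero, mul_one]
    rw [show f z - q 0 = z * (ψ z * (1 - β * f z)) from h2.symm]
    refine HasSum.congr_fun (h1.mul_left z) fun n => ?_
    change (∑ j ∈ range (n + 1), s j * g (n - j)) * z ^ (n + 1) = _
    rw [sum_mul, mul_sum]
    refine sum_congr rfl fun j hj => ?_
    have h1 : j ≤ n := by simpa [Nat.lt_succ_iff] using hj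
    rw [show z ^ (n + 1) = z * (z ^ j * z ^ (n - j)) by
      rw [← pow_add, ← pow_succ']; congr 1; omega]
    ring
  have haq : a = q := coeff_unique a q f hf hq
  have hT : ∀ n, ∑ k ∈ range (n + 1), ‖a (k + 1)‖ ^ 2
      ≤ (1 - ‖α‖ ^ 2) ^ 2 + ‖α‖ ^ 2 * ∑ k ∈ range n, ‖a (k + 1)‖ ^ 2 := by
    intro n
    have h := truncated_contraction ψ s g hs hψ (n + 1)
    have h1 : ∀ k, ∑ j ∈ range (k + 1), s j * g (k - j) = a (k + 1) := fun k => by rw [haq]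
    simp only [h1] at h
    refine h.trans (le_of_eq ?_)
    rw [sum_range_succ', add_comm, mul_sum]
    congr 1
    · have : g 0 = ((1 - ‖α‖ ^ 2 : ℝ) : ℂ) := by
        simp only [g, if_true]
        rw [← hα, hβ, mul_comm, Complex.mul_conj, Complex.normSq_eq_norm_sq]
        push_cast; ring
      rw [this, Complex.norm_real, Real.norm_eq_abs, sq_abs]
    · refine sum_congr rfl fun k _ => ?_
      simp only [g, Nat.add_eq_zero_iff, one_ne_zero, and_false, if_false, zero_sub, norm_neg,
        norm_mul, hβn, mul_pow]
  intro n
  induction n with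
  | zero => simp
  | succ n ih =>
    refine (hT n).trans ?_
    rw [sum_range_succ', add_comm]
    gcongr
    · refine (mul_le_mul_of_nonneg_left ih (by positivity)).trans (le_of_eq ?_)
      rw [mul_sum]
      exact sum_congr rfl fun k _ => by ring
    · simp

/-! ### Weighted sums and the inequality at radius one half -/

/-- Domination of partial sums passes to sums with nonnegative nonincreasing weights. -/
lemma weighted_sum_le (b c w : ℕ → ℝ) (hw0 : ∀ k, 0 ≤ w k) (hw : ∀ k, w (k + 1) ≤ w k)
    (h : ∀ n, ∑ k ∈ range n, b k ≤ ∑ k ∈ range n, c k) (n : ℕ) :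
    ∑ k ∈ range n, w k * b k ≤ ∑ k ∈ range n, w k * c k := by
  -- strengthened for the induction: the gap is at least the last weight times the unweighted gap
  have key : ∀ n, w n * (∑ k ∈ range (n + 1), c k - ∑ k ∈ range (n + 1), b k)
      ≤ ∑ k ∈ range (n + 1), w k * c k - ∑ k ∈ range (n + 1), w k * b k := by
    intro n
    induction n with
    | zero => simp [mul_sub]
    | succ n ih =>
      have := mul_le_mul_of_nonneg_right (hw n) (sub_nonneg.mpr (h (n + 1)))
      rw [sum_range_succ _ (n + 1), sum_range_succ _ (n + 1), sum_range_succ _ (n + 1),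
        sum_range_succ _ (n + 1)]
      linarith
  rcases n with _ | n
  · simp
  · have := mul_nonneg (hw0 n) (sub_nonneg.mpr (h (n + 1)))
    linarith [key n]

lemma weighted_tsum_le (b c w : ℕ → ℝ) (C : ℝ) (hb : ∀ k, 0 ≤ b k) (hc : ∀ k, 0 ≤ c k)
    (hw0 : ∀ k, 0 ≤ w k) (hw : ∀ k, w (k + 1) ≤ w k)
    (h : ∀ n, ∑ k ∈ range n, b k ≤ ∑ k ∈ range n, c k) (hC : HasSum (fun k => w k * c k) C) :
    Summable (fun k => w k * b k) ∧ ∑' k, w k * b k ≤ C := by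
  have h1 : ∀ n, ∑ k ∈ range n, w k * b k ≤ C := fun n =>
    (weighted_sum_le b c w hw0 hw h n).trans
      (sum_le_hasSum _ (fun k _ => mul_nonneg (hw0 k) (hc k)) hC)
  have h2 : ∀ k, 0 ≤ w k * b k := fun k => mul_nonneg (hw0 k) (hb k)
  have h3 := summable_of_sum_range_le h2 h1
  exact ⟨h3, h3.tsum_le_of_sum_range_le h1⟩

lemma geom_weighted (t : ℝ) (b : ℕ → ℝ) (ht0 : 0 ≤ t) (ht1 : t < 1) (hb : ∀ k, 0 ≤ b k)
    (h : ∀ n, ∑ k ∈ range n, b k ≤ ∑ k ∈ range n, (1 - t ^ 2) ^ 2 * (t ^ 2) ^ k)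
    (ρ : ℝ) (hρ0 : 0 ≤ ρ) (hρ1 : ρ ≤ 1) :
    Summable (fun k => ρ ^ k * b k) ∧
      ∑' k, ρ ^ k * b k ≤ (1 - t ^ 2) ^ 2 / (1 - t ^ 2 * ρ) := by
  refine weighted_tsum_le b _ _ _ hb (fun k => by positivity) (fun k => by positivity)
    (fun k => pow_le_pow_of_le_one hρ0 hρ1 (Nat.le_succ k)) h ?_
  have h1 : t ^ 2 * ρ < 1 := by nlinarith
  have := (hasSum_geometric_of_lt_one (by positivity) h1).mul_left ((1 - t ^ 2) ^ 2)
  rw [div_eq_mul_inv]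
  refine HasSum.congr_fun this fun k => ?_
  rw [mul_pow]; ring

lemma area_weighted (t : ℝ) (b : ℕ → ℝ) (ht0 : 0 ≤ t) (ht1 : t < 1) (hb : ∀ k, 0 ≤ b k)
    (h : ∀ n, ∑ k ∈ range n, b k ≤ ∑ k ∈ range n, (1 - t ^ 2) ^ 2 * (t ^ 2) ^ k) :
    Summable (fun k : ℕ => ((k : ℝ) + 1) * (1 / 4) ^ (k + 1) * b k) ∧
      ∑' k : ℕ, ((k : ℝ) + 1) * (1 / 4) ^ (k + 1) * b k
        ≤ 4 * (1 - t ^ 2) ^ 2 / (4 - t ^ 2) ^ 2 := by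
  refine weighted_tsum_le b _ _ _ hb (fun k => by positivity) (fun k => by positivity)
    (fun k => ?_) h ?_
  · push_cast
    rw [pow_succ _ (k + 1)]
    have : (0 : ℝ) < (1 / 4) ^ (k + 1) := by positivity
    have hk : (0 : ℝ) ≤ k := k.cast_nonneg
    nlinarith
  have h0 : 0 ≤ t ^ 2 / 4 := by positivity
  have h1 : t ^ 2 / 4 < 1 := by nlinarith
  have hn : ‖t ^ 2 / 4‖ < 1 := by rwa [Real.norm_of_nonneg h0]
  have := ((hasSum_coe_mul_geometric_of_norm_lt_one hn).add
    (hasSum_geometric_of_lt_one h0 h1)).mul_left ((1 - t ^ 2) ^ 2 / 4)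
  have hval : (1 - t ^ 2) ^ 2 / 4 * (t ^ 2 / 4 / (1 - t ^ 2 / 4) ^ 2 + (1 - t ^ 2 / 4)⁻¹)
      = 4 * (1 - t ^ 2) ^ 2 / (4 - t ^ 2) ^ 2 := by
    rw [show 1 - t ^ 2 / 4 = (4 - t ^ 2) / 4 by ring]
    have : 4 - t ^ 2 ≠ 0 := by nlinarith
    field_simp
    ring
  rw [hval] at this
  refine HasSum.congr_fun this fun k => ?_
  rw [div_pow, div_pow, one_pow, pow_succ]; ring

/-- The weighted inequality `2 x y ≤ l x² + y² / l`, applied termwise, in place of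
Cauchy-Schwarz; the parameter `l` is chosen later. The condition `ρ > 1/4` makes the geometric series
of ratio `1 / (4 ρ)` converge. -/
lemma amgm_tsum (α : ℕ → ℝ) (ρ l A : ℝ) (hα : ∀ k, 0 ≤ α k) (hρ : 1 / 4 < ρ) (hl : 0 < l)
    (hs : Summable (fun k => ρ ^ k * α k ^ 2)) (hA : ∑' k, ρ ^ k * α k ^ 2 ≤ A) :
    Summable (fun k => α k * (1 / 2) ^ (k + 1)) ∧
      ∑' k, α k * (1 / 2) ^ (k + 1) ≤ (l * ρ * A + 1 / (l * (4 * ρ - 1))) / 2 := by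
  have hρ0 : 0 < ρ := by linarith
  have hx0 : 0 ≤ 1 / (4 * ρ) := by positivity
  have hx1 : 1 / (4 * ρ) < 1 := by rw [div_lt_one (by positivity)]; linarith
  have hg := (hasSum_geometric_of_lt_one hx0 hx1).mul_left (1 / (4 * ρ) / (2 * l))
  have hS := (hs.hasSum.mul_left (l * ρ / 2)).add hg
  have hle : ∀ k, α k * (1 / 2) ^ (k + 1)
      ≤ l * ρ / 2 * (ρ ^ k * α k ^ 2) + 1 / (4 * ρ) / (2 * l) * (1 / (4 * ρ)) ^ k := by
    intro k
    have e1 : l * ρ / 2 * (ρ ^ k * α k ^ 2) + 1 / (4 * ρ) / (2 * l) * (1 / (4 * ρ)) ^ k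
        - α k * (1 / 2) ^ (k + 1)
        = (l * ρ ^ (k + 1) * α k - (1 / 2) ^ (k + 1)) ^ 2 / (2 * l * ρ ^ (k + 1)) := by
      have : (1 / (4 * ρ)) ^ k = ((1 / 2) ^ k) ^ 2 / ρ ^ k := by
        rw [← pow_mul, mul_comm k 2, pow_mul, ← div_pow]; congr 1; field_simp; norm_num
      rw [this, pow_succ, pow_succ]
      field_simp
      ring
    have : 0 ≤ (l * ρ ^ (k + 1) * α k - (1 / 2) ^ (k + 1)) ^ 2 / (2 * l * ρ ^ (k + 1)) := by
      positivity
    linarith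
  have hsum : Summable (fun k => α k * (1 / 2) ^ (k + 1)) :=
    Summable.of_nonneg_of_le (fun k => mul_nonneg (hα k) (by positivity)) hle hS.summable
  refine ⟨hsum, (hasSum_le hle hsum.hasSum hS).trans ?_⟩
  have : 1 / (4 * ρ) / (2 * l) * (1 - 1 / (4 * ρ))⁻¹ = 1 / (l * (4 * ρ - 1)) / 2 := by
    have : 4 * ρ - 1 ≠ 0 := by linarith
    have : 1 - 1 / (4 * ρ) ≠ 0 := by linarith
    field_simp
  rw [this]
  have : l * ρ / 2 * ∑' k, ρ ^ k * α k ^ 2 ≤ l * ρ / 2 * A := by gcongr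
  linarith

/-- With `y = t²`, `(4 - y)² - 4 (1 - y)² = 3 (4 - y²)`, which yields the bound for `B / (1 - B)`. -/
lemma area_ratio_le (t B : ℝ) (ht0 : 0 ≤ t) (ht1 : t < 1)
    (hB : B ≤ 4 * (1 - t ^ 2) ^ 2 / (4 - t ^ 2) ^ 2) :
    B / (1 - B) ≤ 4 / 3 * (1 - t ^ 2) ^ 2 / (4 - t ^ 4) := by
  have h2 : t ^ 2 < 1 := by nlinarith
  have h2' : 0 ≤ t ^ 2 := by positivity
  rw [show t ^ 4 = (t ^ 2) ^ 2 by ring]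
  generalize t ^ 2 = y at *
  have h3 : 0 < (4 - y) ^ 2 := by nlinarith
  rw [le_div_iff₀ h3] at hB
  have h4 : 0 < 1 - B := by nlinarith
  have h5 : 0 < 4 - y ^ 2 := by nlinarith
  rw [div_le_div_iff₀ h4 h5]
  nlinarith

/-- The one-variable inequality, with `s` standing for `∑ |a_k| 2^{-k}` and `B` for `S / π`. -/
lemma final_bound (t s B : ℝ) (ht0 : 0 ≤ t) (ht1 : t < 1)
    (hs : (t < 1 / 2 ∧ s ≤ (3 / 5 * (1 - t ^ 2) + 5 / 9) / 2) ∨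
      (1 / 2 ≤ t ∧ s ≤ (1 - t ^ 2) / (2 - t)))
    (hB : B ≤ 4 * (1 - t ^ 2) ^ 2 / (4 - t ^ 2) ^ 2) :
    t ^ 2 + s + 9 / 8 * (B / (1 - B)) ≤ 1 := by
  have h := area_ratio_le t B ht0 ht1 hB
  have h5 : 0 < 4 - t ^ 4 := by nlinarith [pow_lt_one₀ ht0 ht1 (n := 4) (by norm_num)]
  rcases hs with ⟨h1, h2⟩ | ⟨h1, h2⟩
  -- for `t < 1/2`, `4 - t⁴ ≥ 63/16`, and a convex quadratic in `1 - t² ∈ [3/4, 1]` remains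
  · have : 4 / 3 * (1 - t ^ 2) ^ 2 / (4 - t ^ 4) ≤ 64 / 189 * (1 - t ^ 2) ^ 2 := by
      rw [div_le_iff₀ h5]
      have : t ^ 4 ≤ 1 / 16 := by
        calc t ^ 4 ≤ (1 / 2) ^ 4 := by gcongr
          _ = 1 / 16 := by norm_num
      nlinarith [sq_nonneg (1 - t ^ 2)]
    have hy : 3 / 4 ≤ 1 - t ^ 2 := by nlinarith
    have hy1 : 1 - t ^ 2 ≤ 1 := by nlinarith
    nlinarith [mul_nonneg (sub_nonneg.mpr hy) (sub_nonneg.mpr hy1)]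
  · have key : 9 / 8 * (4 / 3 * (1 - t ^ 2) ^ 2 / (4 - t ^ 4))
        ≤ (1 - t ^ 2) * (1 - t) / (2 - t) := by
      rw [← mul_div_assoc, div_le_div_iff₀ h5 (by linarith)]
      have : (3 : ℝ) / 2 * (1 + t) * (2 - t) ≤ 4 - t ^ 4 := by
        nlinarith [sq_nonneg t, mul_nonneg ht0 (sub_nonneg.mpr ht1.le),
          pow_le_one₀ ht0 ht1.le (n := 3)]
      have h6 : 0 ≤ (1 - t) * (1 - t ^ 2) := mul_nonneg (by linarith) (by nlinarith)
      nlinarith [mul_le_mul_of_nonneg_left this h6]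
    have e : (1 - t ^ 2) * (1 - t) / (2 - t) + (1 - t ^ 2) / (2 - t) = 1 - t ^ 2 := by
      have : 2 - t ≠ 0 := by linarith
      field_simp; ring
    linarith

/-- The inequality at radius `1/2`, for `α k = |a_{k+1}|` and `t = |a₀|`. That `S / π < 1` is needed
for the monotonicity in the radius. -/
lemma main_half (α : ℕ → ℝ) (t : ℝ) (hα : ∀ k, 0 ≤ α k) (ht0 : 0 ≤ t) (ht1 : t ≤ 1)
    (h : ∀ n, ∑ k ∈ range n, α k ^ 2 ≤ ∑ k ∈ range n, (1 - t ^ 2) ^ 2 * (t ^ 2) ^ k) :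
    Summable (fun k => α k * (1 / 2) ^ (k + 1)) ∧
    Summable (fun k : ℕ => ((k : ℝ) + 1) * (1 / 4) ^ (k + 1) * α k ^ 2) ∧
    ∑' k : ℕ, ((k : ℝ) + 1) * (1 / 4) ^ (k + 1) * α k ^ 2 < 1 ∧
    t ^ 2 + ∑' k, α k * (1 / 2) ^ (k + 1)
      + 9 / 8 * ((∑' k : ℕ, ((k : ℝ) + 1) * (1 / 4) ^ (k + 1) * α k ^ 2) /
        (1 - ∑' k : ℕ, ((k : ℝ) + 1) * (1 / 4) ^ (k + 1) * α k ^ 2)) ≤ 1 := by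
  rcases ht1.eq_or_lt with rfl | ht1
  · have h0 : ∀ k, α k = 0 := by
      intro k
      have h1 : ∑ j ∈ range (k + 1), α j ^ 2 ≤ 0 := by simpa using h (k + 1)
      have h2 := single_le_sum (f := fun j => α j ^ 2) (fun j _ => sq_nonneg (α j))
        (self_mem_range_succ k)
      exact pow_eq_zero_iff two_ne_zero |>.mp (le_antisymm (h2.trans h1) (sq_nonneg _))
    simp [h0, summable_zero]
  have hb : ∀ k, 0 ≤ α k ^ 2 := fun k => sq_nonneg _
  obtain ⟨hBs, hB⟩ := area_weighted t _ ht0 ht1 hb h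
  have hs : Summable (fun k => α k * (1 / 2) ^ (k + 1)) ∧
      ((t < 1 / 2 ∧ ∑' k, α k * (1 / 2) ^ (k + 1) ≤ (3 / 5 * (1 - t ^ 2) + 5 / 9) / 2) ∨
      (1 / 2 ≤ t ∧ ∑' k, α k * (1 / 2) ^ (k + 1) ≤ (1 - t ^ 2) / (2 - t))) := by
    have hu : 0 < 1 - t ^ 2 := by nlinarith
    rcases lt_or_ge t (1 / 2) with ht | ht
    -- for `t < 1/2`, `ρ = 1` and the constant `l = 3/5` are good enough
    · obtain ⟨g1, g2⟩ := geom_weighted t _ ht0 ht1 hb h 1 zero_le_one le_rfl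
      obtain ⟨g3, g4⟩ := amgm_tsum α 1 (3 / 5) _ hα (by norm_num) (by norm_num) g1 g2
      refine ⟨g3, Or.inl ⟨ht, g4.trans (le_of_eq ?_)⟩⟩
      field_simp
      ring
    -- `ρ = 1 / (2 t)` and `l = t / (1 - t²)` give equality for the Möbius map
    · have ht' : 0 < t := by linarith
      have hρ1 : 1 / (2 * t) ≤ 1 := by rw [div_le_one (by positivity)]; linarith
      obtain ⟨g1, g2⟩ := geom_weighted t _ ht0 ht1 hb h (1 / (2 * t)) (by positivity) hρ1
      obtain ⟨g3, g4⟩ := amgm_tsum α (1 / (2 * t)) (t / (1 - t ^ 2)) _ hα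
        (by rw [div_lt_div_iff₀ (by norm_num) (by positivity)]; linarith) (by positivity) g1 g2
      refine ⟨g3, Or.inr ⟨ht, g4.trans (le_of_eq ?_)⟩⟩
      have e1 : 1 - t ^ 2 * (1 / (2 * t)) = (2 - t) / 2 := by field_simp
      have e2 : 4 * (1 / (2 * t)) - 1 = (2 - t) / t := by field_simp; ring
      have : 2 - t ≠ 0 := by linarith
      rw [e1, e2]
      field_simp
      ring
  refine ⟨hs.1, hBs, ?_, final_bound t _ _ ht0 ht1 hs.2 hB⟩
  refine hB.trans_lt ?_
  have hy0 : 0 ≤ t ^ 2 := sq_nonneg t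
  have hy1 : t ^ 2 < 1 := by nlinarith
  rw [div_lt_one (by nlinarith)]
  nlinarith

/-- Every term is nondecreasing in the radius, so the inequality at `1/2` implies it for
`r ≤ 1/2`. -/
lemma bound_of_le_half (α : ℕ → ℝ) (t r : ℝ) (hα : ∀ k, 0 ≤ α k) (ht0 : 0 ≤ t) (ht1 : t ≤ 1)
    (hr0 : 0 ≤ r) (hr : r ≤ 1 / 2)
    (h : ∀ n, ∑ k ∈ range n, α k ^ 2 ≤ ∑ k ∈ range n, (1 - t ^ 2) ^ 2 * (t ^ 2) ^ k) :
    Summable (fun k : ℕ => ((k : ℝ) + 1) * α k ^ 2 * r ^ (2 * (k + 1))) ∧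
    t ^ 2 + ∑' k, α k * r ^ (k + 1)
      + 9 / 8 * ((∑' k : ℕ, ((k : ℝ) + 1) * α k ^ 2 * r ^ (2 * (k + 1))) /
        (1 - ∑' k : ℕ, ((k : ℝ) + 1) * α k ^ 2 * r ^ (2 * (k + 1)))) ≤ 1 := by
  obtain ⟨h1, h2, h3, h4⟩ := main_half α t hα ht0 ht1 h
  have l1 : ∀ k, α k * r ^ (k + 1) ≤ α k * (1 / 2) ^ (k + 1) := fun k =>
    mul_le_mul_of_nonneg_left (pow_le_pow_left₀ hr0 hr _) (hα k)
  have l2 : ∀ k : ℕ, ((k : ℝ) + 1) * α k ^ 2 * r ^ (2 * (k + 1))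
      ≤ ((k : ℝ) + 1) * (1 / 4) ^ (k + 1) * α k ^ 2 := by
    intro k
    have : r ^ (2 * (k + 1)) ≤ (1 / 4) ^ (k + 1) := by
      rw [pow_mul]
      exact pow_le_pow_left₀ (sq_nonneg r) (by nlinarith) _
    calc _ ≤ ((k : ℝ) + 1) * α k ^ 2 * (1 / 4) ^ (k + 1) := by gcongr
      _ = _ := by ring
  have n2 : ∀ k : ℕ, 0 ≤ ((k : ℝ) + 1) * α k ^ 2 * r ^ (2 * (k + 1)) := fun k => by positivity
  have s1 := Summable.of_nonneg_of_le (fun k => mul_nonneg (hα k) (pow_nonneg hr0 _)) l1 h1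
  have s2 := Summable.of_nonneg_of_le n2 l2 h2
  refine ⟨s2, le_trans ?_ h4⟩
  have i1 := s1.tsum_le_tsum l1 h1
  have i2 := s2.tsum_le_tsum l2 h2
  have i3 : 0 ≤ ∑' k : ℕ, ((k : ℝ) + 1) * α k ^ 2 * r ^ (2 * (k + 1)) := tsum_nonneg n2
  gcongr

/-- Improved Bohr inequality with |a₀|² and S_r/(π - S_r) term. -/
theorem bohr_improved_area_ratio_sq (f : ℂ → ℂ) (a : ℕ → ℂ)
    (hf : ∀ z : ℂ, ‖z‖ < 1 → HasSum (fun n => a n * z ^ n) (f z))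
    (hbd : ∀ z : ℂ, ‖z‖ < 1 → ‖f z‖ ≤ 1)
    (r : ℝ) (hr0 : 0 ≤ r) (hr : r ≤ 1 / 2)
    (S : ℝ) (hS : S = Real.pi * ∑' n : ℕ, (n : ℝ) * ‖a n‖ ^ 2 * r ^ (2 * n)) :
    ‖a 0‖ ^ 2 + ∑' n : ℕ, ‖a (n + 1)‖ * r ^ (n + 1) + (9 / 8) * (S / (Real.pi - S)) ≤ 1 := by

  obtain ⟨h0, hT⟩ := partial_sum_le f a hf hbd
  obtain ⟨hs, hmain⟩ := bound_of_le_half (fun k => ‖a (k + 1)‖) ‖a 0‖ r (fun _ => norm_nonneg _)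
    (norm_nonneg _) h0 hr0 hr hT
  -- the statement sums the area series from `n = 0`, where the term vanishes
  have hs' : Summable fun n : ℕ => (n : ℝ) * ‖a n‖ ^ 2 * r ^ (2 * n) :=
    (summable_nat_add_iff 1).mp (by exact_mod_cast hs)
  have hB : ∑' n : ℕ, (n : ℝ) * ‖a n‖ ^ 2 * r ^ (2 * n)
      = ∑' k : ℕ, ((k : ℝ) + 1) * ‖a (k + 1)‖ ^ 2 * r ^ (2 * (k + 1)) := by
    rw [hs'.tsum_eq_zero_add]
    simp
  have hq : S / (Real.pi - S)
      = (∑' k : ℕ, ((k : ℝ) + 1) * ‖a (k + 1)‖ ^ 2 * r ^ (2 * (k + 1))) /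
        (1 - ∑' k : ℕ, ((k : ℝ) + 1) * ‖a (k + 1)‖ ^ 2 * r ^ (2 * (k + 1))) := by
    rw [hS, hB, ← mul_one_sub, mul_div_mul_left _ _ Real.pi_ne_zero]
  rw [hq]
  exact hmain
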